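/- For every length-m nonincreasing scoring vector α over the rationals, there exists a unique normalized nonincreasing scoring vector β over the naturals such that α and β yield the same winner set on every multiset of votes over m candidates. -/

import Mathlib

/-- Score of candidate c under rational scoring vector α for the multiset of votes V. -/
def score {m : ℕ} (α : Fin m → ℚ) (V : Multiset (Equiv.Perm (Fin m))) (c : Fin m) : ℚ :=
  (V.map fun v => α (v.symm c)).sum

/-- Winners: candidates with maximal total score. -/
def winners {m : ℕ} (α : Fin m → ℚ) (V : Multiset (Equiv.Perm (Fin m))) : Set (Fin m) :=
  {c | ∀ d, score α V d ≤ score α V c}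

/-!
Two scoring vectors define the same rule exactly when they differ by a positive affine
transformation; among the rational vectors in such a class, requiring a prescribed lowest entry to
be `0` and the entries to be coprime naturals leaves exactly one.

For the rigidity statement, fix candidates `a ≠ b`. If `α` is not constant, the profile of all
votes that put `a` or `b` on a best position makes `a` and `b` tie, ahead of everybody else.
Adding many copies of it to an arbitrary profile `W` leaves only `a` and `b` in contention, so the
winner sets determine whether `a` is ahead of `b` in `W`. Profiles `W` made of copies of two votes
then show that winner sets determine every comparison between nonnegative multiples of two score
gaps `α i - α j`, hence the ratios of the gaps.
-/

theorem exists_common_denominator {ι : Type*} [Finite ι] (f : ι → ℚ≥0) :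
    ∃ d : ℕ, 0 < d ∧ ∃ n : ι → ℕ, ∀ i, (n i : ℚ≥0) = d * f i := by
  have := Fintype.ofFinite ι
  have exists_natCast (i : ι) : ∃ k : ℕ, (k : ℚ≥0) = (∏ j, (f j).den : ℕ) * f i := by
    obtain ⟨e, he⟩ := Finset.dvd_prod_of_mem (fun j => (f j).den) (Finset.mem_univ i)
    refine ⟨e * (f i).num, ?_⟩
    rw [he, Nat.cast_mul, Nat.cast_mul, ← NNRat.den_mul_eq_num]
    ring
  exact ⟨_, Finset.prod_pos fun i _ => (f i).den_pos, Classical.skolem.1 exists_natCast⟩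

section GCDNormalized

variable {ι : Type*} [Fintype ι]

/-- A family of naturals is normalized if its entries have greatest common divisor `1` or all
vanish. The part of the normalization of scoring vectors that asks for a zero last entry is kept
separate. -/
def IsGCDNormalized (f : ι → ℕ) : Prop :=
  Finset.univ.gcd f = 1 ∨ ∀ i, f i = 0

theorem IsGCDNormalized.eq_of_mul_eq_mul {f g : ι → ℕ} (hf : IsGCDNormalized f)
    (hg : IsGCDNormalized g) {p q : ℕ} (hp : 0 < p) (hq : 0 < q)
    (h : ∀ i, p * f i = q * g i) : f = g := by
  have zero_iff (i : ι) : f i = 0 ↔ g i = 0 := by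
    simpa [hp.ne', hq.ne'] using congrArg (· = 0) (h i)
  rcases hf with hf | hf
  · rcases hg with hg | hg
    · have hpq : p = q := by
        simpa [Finset.gcd_mul_left, hf, hg] using congrArg Finset.univ.gcd (funext h)
      exact funext fun i => Nat.eq_of_mul_eq_mul_left hp (by rw [h i, hpq])
    · exact funext fun i => by rw [(zero_iff i).2 (hg i), hg i]
  · exact funext fun i => by rw [(zero_iff i).1 (hf i), hf i]

theorem IsGCDNormalized.eq_of_natCast_eq_mul {f g : ι → ℕ} (hf : IsGCDNormalized f)
    (hg : IsGCDNormalized g) {s : ℚ} (hs : 0 < s) (h : ∀ i, (g i : ℚ) = s * f i) : f = g := by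
  lift s to ℚ≥0 using hs.le
  have hs' : 0 < s := by exact_mod_cast hs
  refine hf.eq_of_mul_eq_mul hg (NNRat.num_pos.2 hs') s.den_pos fun i => ?_
  have hi : (g i : ℚ≥0) = s * f i := by exact_mod_cast h i
  have : (s.num * f i : ℚ≥0) = s.den * g i := by
    rw [hi, ← mul_assoc, NNRat.den_mul_eq_num]
  exact_mod_cast this

theorem exists_isGCDNormalized_natCast_eq_mul (f : ι → ℚ≥0) :
    ∃ s : ℚ≥0, 0 < s ∧ ∃ n : ι → ℕ, IsGCDNormalized n ∧ ∀ i, (n i : ℚ≥0) = s * f i := by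
  obtain ⟨d, hd, n, hn⟩ := exists_common_denominator f
  by_cases hzero : ∀ i, n i = 0
  · exact ⟨d, by exact_mod_cast hd, n, Or.inr hzero, hn⟩
  obtain ⟨j, hj⟩ := not_forall.1 hzero
  have hgcd : Finset.univ.gcd n ≠ 0 := fun h =>
    hj (Finset.gcd_eq_zero_iff.1 h j (Finset.mem_univ j))
  obtain ⟨k, hk, hk_gcd⟩ := Finset.extract_gcd n ⟨j, Finset.mem_univ j⟩
  refine ⟨d / (Finset.univ.gcd n : ℕ), by positivity, k, Or.inl hk_gcd, fun i => ?_⟩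
  rw [div_mul_eq_mul_div, ← hn i, hk i (Finset.mem_univ i), Nat.cast_mul,
    mul_div_cancel_left₀ _ (Nat.cast_ne_zero.2 hgcd)]

end GCDNormalized

section Score

variable {m : ℕ} (α : Fin m → ℚ)

theorem score_zero (c : Fin m) : score α 0 c = 0 := by
  simp [score]

theorem score_singleton (v : Equiv.Perm (Fin m)) (c : Fin m) : score α {v} c = α (v.symm c) := by
  simp [score]

theorem score_add (V W : Multiset (Equiv.Perm (Fin m))) (c : Fin m) :
    score α (V + W) c = score α V c + score α W c := by
  simp [score]

theorem score_nsmul (k : ℕ) (V : Multiset (Equiv.Perm (Fin m))) (c : Fin m) :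
    score α (k • V) c = k * score α V c := by
  simp [score, Multiset.map_nsmul, Multiset.sum_nsmul]

theorem score_mul_add (s t : ℚ) (V : Multiset (Equiv.Perm (Fin m))) (c : Fin m) :
    score (fun i => s * α i + t) V c = s * score α V c + V.card * t := by
  simp [score, Multiset.sum_map_add, Multiset.sum_map_mul_left]

theorem winners_mul_add {s : ℚ} (hs : 0 < s) (t : ℚ) (V : Multiset (Equiv.Perm (Fin m))) :
    winners (fun i => s * α i + t) V = winners α V := by
  simp only [winners, score_mul_add, add_le_add_iff_right, mul_le_mul_iff_right₀ hs]

end Score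

section Profiles

variable {m : ℕ}

theorem exists_perm_apply_eq_apply_eq {i j a b : Fin m} (hij : i ≠ j) (hab : a ≠ b) :
    ∃ v : Equiv.Perm (Fin m), v i = a ∧ v j = b :=
  MulAction.is_two_pretransitive_iff.1
    (Equiv.Perm.isMultiplyPretransitive (Fin m) 2) hij hab

theorem exists_forall_score_sub_score_eq {a b : Fin m} (hab : a ≠ b) (i j : Fin m) :
    ∃ V, ∀ α : Fin m → ℚ, score α V a - score α V b = α i - α j := by
  rcases eq_or_ne i j with rfl | hij
  · exact ⟨0, fun α => by simp [score_zero]⟩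
  · obtain ⟨v, rfl, rfl⟩ := exists_perm_apply_eq_apply_eq hij hab
    exact ⟨{v}, fun α => by simp [score_singleton]⟩

/-- The profile in which every vote that places candidate `x` on position `z` is cast once. -/
def votesPlacing (z x : Fin m) : Multiset (Equiv.Perm (Fin m)) :=
  (Finset.univ.filter fun v : Equiv.Perm (Fin m) => v z = x).val

theorem score_votesPlacing_apply (α : Fin m → ℚ) (π : Equiv.Perm (Fin m)) (z x c : Fin m) :
    score α (votesPlacing z (π x)) (π c) = score α (votesPlacing z x) c := by
  refine (Finset.sum_equiv (Equiv.mulLeft π) (fun v => ?_) fun v _ => ?_).symm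
  · simp
  · exact congrArg (fun d => α (v.symm d)) (π.symm_apply_apply c).symm

theorem score_votesPlacing_lt {α : Fin m → ℚ} {z l x y : Fin m} (hz : ∀ i, α i ≤ α z)
    (hl : α l < α z) (hxy : x ≠ y) :
    score α (votesPlacing z x) y < score α (votesPlacing z x) x := by
  have hzl : z ≠ l := fun h => hl.ne (congrArg α h.symm)
  obtain ⟨w, hwz, hwl⟩ := exists_perm_apply_eq_apply_eq hzl hxy
  have symm_apply (v) (hv : v ∈ Finset.univ.filter fun v : Equiv.Perm (Fin m) => v z = x) :
      v.symm x = z := v.symm_apply_eq.2 (Finset.mem_filter.1 hv).2.symm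
  refine Finset.sum_lt_sum (fun v hv => ?_) ⟨w, by simp [hwz], ?_⟩
  · rw [symm_apply v hv]
    exact hz _
  · rwa [← hwz, ← hwl, w.symm_apply_apply, w.symm_apply_apply]

theorem score_votesPlacing_eq_of_ne (α : Fin m → ℚ) (z : Fin m) {x c d : Fin m} (hc : x ≠ c)
    (hd : x ≠ d) : score α (votesPlacing z x) c = score α (votesPlacing z x) d := by
  simpa [Equiv.swap_apply_of_ne_of_ne hc hd] using
    (score_votesPlacing_apply α (Equiv.swap c d) z x c).symm

theorem exists_score_eq_and_forall_score_lt {α : Fin m → ℚ} {z l a b : Fin m}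
    (hz : ∀ i, α i ≤ α z) (hl : α l < α z) (hab : a ≠ b) :
    ∃ U, (∀ β : Fin m → ℚ, score β U a = score β U b) ∧
      ∀ c, c ≠ a → c ≠ b → score α U c < score α U a := by
  refine ⟨votesPlacing z a + votesPlacing z b, fun β => ?_, fun c hca hcb => ?_⟩
  · have haa := score_votesPlacing_apply β (Equiv.swap a b) z a a
    have hba := score_votesPlacing_apply β (Equiv.swap a b) z b a
    simp only [Equiv.swap_apply_left, Equiv.swap_apply_right] at haa hba
    rw [score_add, score_add, haa, hba, add_comm]
  · rw [score_add, score_add, score_votesPlacing_eq_of_ne α z hca.symm hab,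
      score_votesPlacing_eq_of_ne α z hcb.symm hab.symm]
    exact add_lt_add_left (score_votesPlacing_lt hz hl hab) _

theorem exists_forall_score_nsmul_add_le {α : Fin m → ℚ} {U : Multiset (Equiv.Perm (Fin m))}
    {a b : Fin m} (hU_tie : score α U a = score α U b)
    (hU_lt : ∀ c, c ≠ a → c ≠ b → score α U c < score α U a)
    {W : Multiset (Equiv.Perm (Fin m))} (hW : score α W b ≤ score α W a) :
    ∃ k : ℕ, ∀ c, score α (k • U + W) c ≤ score α (k • U + W) a := by
  suffices ∀ c, ∀ᶠ k : ℕ in Filter.atTop, score α (k • U + W) c ≤ score α (k • U + W) a from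
    (Filter.eventually_all.2 this).exists
  intro c
  simp only [score_add, score_nsmul]
  rcases eq_or_ne c a with rfl | hca
  · exact .of_forall fun _ => le_rfl
  rcases eq_or_ne c b with rfl | hcb
  · exact .of_forall fun k => by rw [hU_tie]; gcongr
  have lead_tendsto : Filter.Tendsto (fun k : ℕ => (k : ℚ) * (score α U a - score α U c))
      Filter.atTop Filter.atTop :=
    tendsto_natCast_atTop_atTop.atTop_mul_const (sub_pos.2 (hU_lt c hca hcb))
  filter_upwards [lead_tendsto.eventually_ge_atTop (score α W c - score α W a)] with k hk
  linarith

end Profiles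

section Rigidity

variable {m : ℕ} {α β : Fin m → ℚ}

theorem score_le_score_of_forall_winners_eq (h : ∀ V, winners α V = winners β V)
    {W : Multiset (Equiv.Perm (Fin m))} {a b : Fin m} (hW : score α W b ≤ score α W a) :
    score β W b ≤ score β W a := by
  rcases eq_or_ne a b with rfl | hab
  · rfl
  have : Nonempty (Fin m) := ⟨a⟩
  obtain ⟨z, hz⟩ := Finite.exists_max α
  by_cases hconst : ∃ l, α l < α z
  · obtain ⟨l, hl⟩ := hconst
    obtain ⟨U, hU_tie, hU_lt⟩ := exists_score_eq_and_forall_score_lt hz hl hab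
    obtain ⟨k, hk⟩ := exists_forall_score_nsmul_add_le (hU_tie α) hU_lt hW
    have ha : a ∈ winners β (k • U + W) := h _ ▸ hk
    simpa only [score_add, score_nsmul, hU_tie, add_le_add_iff_left] using ha b
  · have hα : α = fun _ => α z :=
      funext fun i => (hz i).antisymm (not_lt.1 (not_exists.1 hconst i))
    have ha : a ∈ winners α W := fun d => by rw [hα]; simp [score]
    exact (h W ▸ ha : a ∈ winners β W) b

theorem apply_le_apply_of_forall_winners_eq (h : ∀ V, winners α V = winners β V) {i j : Fin m}
    (hij : α i ≤ α j) : β i ≤ β j := by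
  have hscore : score α {Equiv.refl _} i ≤ score α {Equiv.refl _} j := by
    simpa [score_singleton] using hij
  simpa [score_singleton] using score_le_score_of_forall_winners_eq h hscore

theorem natCast_mul_sub_le_of_forall_winners_eq (h : ∀ V, winners α V = winners β V)
    {i j k l : Fin m} {p q : ℕ} (hα : p * (α i - α j) ≤ q * (α k - α l)) :
    p * (β i - β j) ≤ q * (β k - β l) := by
  rcases subsingleton_or_nontrivial (Fin m) with _ | _
  · simp [Subsingleton.elim i j, Subsingleton.elim k l]
  obtain ⟨a, b, hab⟩ := exists_pair_ne (Fin m)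
  obtain ⟨V, hV⟩ := exists_forall_score_sub_score_eq hab j i
  obtain ⟨W, hW⟩ := exists_forall_score_sub_score_eq hab k l
  have score_sub_score (γ : Fin m → ℚ) : score γ (p • V + q • W) a - score γ (p • V + q • W) b =
      q * (γ k - γ l) - p * (γ i - γ j) := by
    simp only [score_add, score_nsmul]
    linear_combination p * hV γ + q * hW γ
  rw [← sub_nonneg, ← score_sub_score, sub_nonneg] at hα ⊢
  exact score_le_score_of_forall_winners_eq h hα

theorem mul_sub_le_of_forall_winners_eq (h : ∀ V, winners α V = winners β V)
    {i j k l : Fin m} {p q : ℚ} (hp : 0 ≤ p) (hq : 0 ≤ q)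
    (hα : p * (α i - α j) ≤ q * (α k - α l)) : p * (β i - β j) ≤ q * (β k - β l) := by
  lift p to ℚ≥0 using hp
  lift q to ℚ≥0 using hq
  have clear_denominators (x y : ℚ) :
      (p : ℚ) * x ≤ q * y ↔ ((p.num * q.den : ℕ) : ℚ) * x ≤ ((q.num * p.den : ℕ) : ℚ) * y := by
    have hpd : (0 : ℚ) < p.den := by exact_mod_cast p.den_pos
    have hqd : (0 : ℚ) < q.den := by exact_mod_cast q.den_pos
    have hpn : (p.num : ℚ) = p.den * p := by exact_mod_cast p.den_mul_eq_num.symm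
    have hqn : (q.num : ℚ) = q.den * q := by exact_mod_cast q.den_mul_eq_num.symm
    rw [← mul_le_mul_iff_right₀ (mul_pos hpd hqd), Nat.cast_mul, Nat.cast_mul, hpn, hqn]
    ring_nf
  rw [clear_denominators] at hα ⊢
  exact natCast_mul_sub_le_of_forall_winners_eq h hα

theorem sub_mul_sub_eq_of_forall_winners_eq (h : ∀ V, winners α V = winners β V) {l : Fin m}
    (hl : ∀ i, α l ≤ α i) (i j : Fin m) :
    (α j - α l) * (β i - β l) = (α i - α l) * (β j - β l) :=
  (mul_sub_le_of_forall_winners_eq h (sub_nonneg.2 (hl j)) (sub_nonneg.2 (hl i))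
    (mul_comm _ _).le).antisymm
  (mul_sub_le_of_forall_winners_eq h (sub_nonneg.2 (hl i)) (sub_nonneg.2 (hl j))
    (mul_comm _ _).le)

theorem forall_winners_eq_iff :
    (∀ V, winners α V = winners β V) ↔ ∃ s, 0 < s ∧ ∃ t, ∀ i, β i = s * α i + t := by
  refine ⟨fun h => ?_, fun ⟨s, hs, t, hβ⟩ V => by rw [funext hβ, winners_mul_add α hs t V]⟩
  rcases isEmpty_or_nonempty (Fin m) with _ | _
  · exact ⟨1, one_pos, 0, isEmptyElim⟩
  obtain ⟨l, hl⟩ := Finite.exists_min α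
  by_cases hconst : ∃ j, α l < α j
  · obtain ⟨j, hlj⟩ := hconst
    have hβlj : β l < β j := lt_of_not_ge fun hjl =>
      hlj.not_ge (apply_le_apply_of_forall_winners_eq (fun V => (h V).symm) hjl)
    refine ⟨(β j - β l) / (α j - α l), div_pos (sub_pos.2 hβlj) (sub_pos.2 hlj),
      β l - (β j - β l) / (α j - α l) * α l, fun i => ?_⟩
    have := sub_mul_sub_eq_of_forall_winners_eq h hl i j
    have := (sub_pos.2 hlj).ne'
    field_simp
    linarith
  · have hα (i : Fin m) : α i ≤ α l := not_lt.1 (not_exists.1 hconst i)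
    refine ⟨1, one_pos, β l - α l, fun i => ?_⟩
    have hαi : α i = α l := (hα i).antisymm (hl i)
    have hβi : β i = β l := (apply_le_apply_of_forall_winners_eq h (hα i)).antisymm
      (apply_le_apply_of_forall_winners_eq h (hl i))
    rw [hαi, hβi]
    ring

theorem eq_of_forall_winners_natCast_eq {f g : Fin m → ℕ} {l : Fin m} (hfl : f l = 0)
    (hgl : g l = 0) (hf : IsGCDNormalized f) (hg : IsGCDNormalized g)
    (h : ∀ V, winners (fun i => (f i : ℚ)) V = winners (fun i => (g i : ℚ)) V) : f = g := by
  obtain ⟨s, hs, t, hst⟩ := forall_winners_eq_iff.1 h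
  have ht : t = 0 := by simpa [hfl, hgl] using (hst l).symm
  exact hf.eq_of_natCast_eq_mul hg hs fun i => by rw [hst i, ht, add_zero]

theorem exists_isGCDNormalized_forall_winners_eq {l : Fin m} (hl : ∀ i, α l ≤ α i) :
    ∃ f : Fin m → ℕ, f l = 0 ∧ IsGCDNormalized f ∧
      ∀ V, winners α V = winners (fun i => (f i : ℚ)) V := by
  obtain ⟨s, hs, f, hf, hfα⟩ := exists_isGCDNormalized_natCast_eq_mul
    fun i => (⟨α i - α l, sub_nonneg.2 (hl i)⟩ : ℚ≥0)
  have natCast_eq (i : Fin m) : (f i : ℚ) = s * (α i - α l) := by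
    exact_mod_cast congrArg NNRat.cast (hfα i)
  refine ⟨f, by simpa using natCast_eq l, hf, forall_winners_eq_iff.2 ⟨s, ?_, -(s * α l), ?_⟩⟩
  · exact_mod_cast hs
  · exact fun i => by rw [natCast_eq i]; ring

end Rigidity

theorem stmt_3_general {m : ℕ} (α : Fin m → ℚ) (l : Fin m) (hl : ∀ i, α l ≤ α i) :
    ∃! β : Fin m → ℕ,
      β l = 0 ∧
      (Finset.univ.gcd β = 1 ∨ ∀ i, β i = 0) ∧
      ∀ V : Multiset (Equiv.Perm (Fin m)),
        winners α V = winners (fun i => (β i : ℚ)) V := by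
  obtain ⟨β, hβl, hβ, hβα⟩ := exists_isGCDNormalized_forall_winners_eq hl
  refine ⟨β, ⟨hβl, hβ, hβα⟩, fun γ ⟨hγl, hγ, hγα⟩ => ?_⟩
  exact eq_of_forall_winners_natCast_eq hγl hβl hγ hβ fun V => (hγα V).symm.trans (hβα V)

/-- Every rational nonincreasing scoring vector has exactly one normalized natural
nonincreasing scoring vector yielding the same winner set on every multiset of votes. -/
theorem stmt_3 (m : ℕ) (hm : 1 ≤ m) (α : Fin m → ℚ) (hα : Antitone α) :
    ∃! β : Fin m → ℕ,
      Antitone β ∧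
      β ⟨m - 1, by omega⟩ = 0 ∧
      (Finset.univ.gcd β = 1 ∨ ∀ i, β i = 0) ∧
      ∀ V : Multiset (Equiv.Perm (Fin m)),
        winners α V = winners (fun i => (β i : ℚ)) V := by
  refine (existsUnique_congr fun β => and_iff_right_of_imp fun h i j hij => ?_).2
    (stmt_3_general α _ fun i => hα (Nat.le_sub_one_of_lt i.isLt))
  exact_mod_cast apply_le_apply_of_forall_winners_eq h.2.2 (hα hij)
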